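/- Let ε, η ∈ ℓ²(ℕ; 𝓗) and let γ_ε = ∑_k ε_k ⊗ ε̄_k and γ_η = ∑_k η_k ⊗ η̄_k. Then the trace norm of the difference satisfies tr |γ_ε − γ_η| ≤ ‖ε − η‖ (‖ε‖ + ‖η‖), where |T| = (T*T)^{1/2}. -/

import Mathlib

open scoped InnerProductSpace

/-- The rank-one operator `x ⊗ ȳ : z ↦ ⟪y, z⟫ x` on a complex Hilbert space. -/
noncomputable def rankOne {H : Type*} [NormedAddCommGroup H] [InnerProductSpace ℂ H]
    (x y : H) : H →L[ℂ] H :=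
  (innerSL ℂ y).smulRight x

/-- The absolute value `|T| = (T*T)^{1/2}` of a bounded operator, via the
continuous functional calculus square root. -/
noncomputable def opAbs {H : Type*} [NormedAddCommGroup H] [InnerProductSpace ℂ H]
    [CompleteSpace H] (T : H →L[ℂ] H) : H →L[ℂ] H :=
  CFC.sqrt (star T * T)

/-!
The trace norm is dual to the operator norm: `|T|` is a norm limit of operators `V T` with
`‖V‖ ≤ 1`, so `tr |T|` is controlled by the finite sections of `tr (V T)`. For `V (x ⊗ ȳ)`, which is
`V x ⊗ ȳ`, Cauchy–Schwarz and Bessel bound these by `‖V‖ ‖x‖ ‖y‖`. The estimate follows from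
`ε_k ⊗ ε̄_k - η_k ⊗ η̄_k = (ε_k - η_k) ⊗ ε̄_k + η_k ⊗ (ε_k - η_k)‾`
by summing over `k` and applying Cauchy–Schwarz in `ℓ²`.
-/

section CStarAlgebra

variable {A : Type*} [CStarAlgebra A] [PartialOrder A] [StarOrderedRing A]

lemma norm_mul_star_eq_norm_mul_abs (b a : A) : ‖b * star a‖ = ‖b * CFC.abs a‖ := by
  have h_sq : ‖b * star a‖ * ‖b * star a‖ = ‖b * CFC.abs a‖ * ‖b * CFC.abs a‖ := by
    simp only [← CStarRing.norm_self_mul_star, star_mul, star_star,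
      (CFC.abs_nonneg a).isSelfAdjoint.star_eq]
    rw [mul_assoc, ← mul_assoc (star a), ← CFC.abs_mul_abs]
    simp only [mul_assoc]
  exact (mul_self_inj (norm_nonneg _) (norm_nonneg _)).1 h_sq

-- The witness is `b = (c + δ)⁻¹`, for which `c - b c² = δ b c`.
lemma exists_norm_mul_le_one_norm_sub_mul_mul_le {c : A} (hc : 0 ≤ c) {δ : ℝ} (hδ : 0 < δ) :
    ∃ b : A, ‖b * c‖ ≤ 1 ∧ ‖c - b * c * c‖ ≤ δ := by
  have h_pos : ∀ t ∈ spectrum ℝ c, 0 < t + δ :=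
    fun t ht ↦ add_pos_of_nonneg_of_pos (spectrum_nonneg_of_nonneg hc ht) hδ
  have h_cont : ContinuousOn (fun t ↦ (t + δ)⁻¹) (spectrum ℝ c) :=
    ContinuousOn.inv₀ (by fun_prop) fun t ht ↦ (h_pos t ht).ne'
  let b := cfc (fun t : ℝ ↦ (t + δ)⁻¹) c
  have h_mul : b * c = cfc (fun t ↦ (t + δ)⁻¹ * t) c := by
    rw [cfc_mul (fun t ↦ (t + δ)⁻¹) (fun t ↦ t) c, cfc_id' ℝ c]
  have h_inv : b * c + δ • b = 1 := by
    rw [h_mul, ← cfc_const_mul δ (fun t ↦ (t + δ)⁻¹) c, ← cfc_add .., ← cfc_const_one ℝ c]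
    refine cfc_congr fun t ht ↦ ?_
    have := (h_pos t ht).ne'
    field_simp
  have h_sub : c - b * c * c = δ • (b * c) := by
    rw [← smul_mul_assoc, eq_sub_of_add_eq' h_inv, sub_mul, one_mul]
  have h_norm : ‖b * c‖ ≤ 1 := by
    rw [h_mul]
    refine norm_cfc_le zero_le_one fun t ht ↦ ?_
    have ht₀ : 0 ≤ t := spectrum_nonneg_of_nonneg hc ht
    rw [Real.norm_of_nonneg (by positivity), inv_mul_le_one₀ (h_pos t ht)]
    exact le_add_of_nonneg_right hδ.le
  refine ⟨b, h_norm, ?_⟩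
  rw [h_sub, norm_smul, Real.norm_of_nonneg hδ.le]
  exact mul_le_of_le_one_right hδ.le h_norm

lemma abs_mem_closure_image_mul_right_closedBall (a : A) :
    CFC.abs a ∈ closure ((· * a) '' Metric.closedBall 0 1) := by
  refine (mem_closure_iff_nhds_basis Metric.nhds_basis_closedBall).2 fun δ hδ ↦ ?_
  obtain ⟨b, hb, h_approx⟩ :=
    exists_norm_mul_le_one_norm_sub_mul_mul_le (CFC.abs_nonneg a) hδ
  refine ⟨b * star a * a, ⟨b * star a, ?_, rfl⟩, ?_⟩
  · rwa [mem_closedBall_zero_iff, norm_mul_star_eq_norm_mul_abs]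
  · rwa [mem_closedBall_iff_norm', mul_assoc, ← CFC.abs_mul_abs, ← mul_assoc]

end CStarAlgebra

section HilbertSpace

variable {H : Type*} [NormedAddCommGroup H] [InnerProductSpace ℂ H] {ι κ : Type*}

lemma norm_rankOne (x y : H) : ‖rankOne x y‖ = ‖x‖ * ‖y‖ :=
  InnerProductSpace.norm_rankOne x y

lemma mul_rankOne (V : H →L[ℂ] H) (x y : H) : V * rankOne x y = rankOne (V x) y :=
  InnerProductSpace.comp_rankOne x y V

lemma rankOne_self_sub_rankOne_self (x y : H) :
    rankOne x x - rankOne y y = rankOne (x - y) x + rankOne y (x - y) := by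
  ext z
  simp [rankOne, smul_sub, sub_smul]

/-- The section `∑ i ∈ s, ⟪v i, T (v i)⟫` of the trace of `T` over finitely many members of a
family `v`, as a functional of `T`. For `v` a Hilbert basis and `T` positive, `tr T` is the supremum
of these sections. -/
noncomputable def traceOn (v : ι → H) (s : Finset ι) : (H →L[ℂ] H) →L[ℂ] ℂ :=
  ∑ i ∈ s, innerSL ℂ (v i) ∘L ContinuousLinearMap.apply ℂ H (v i)

lemma traceOn_apply (v : ι → H) (s : Finset ι) (T : H →L[ℂ] H) :
    traceOn v s T = ∑ i ∈ s, ⟪v i, T (v i)⟫_ℂ := by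
  simp [traceOn]

lemma sqrt_sum_norm_inner_sq_le {v : ι → H} (hv : Orthonormal ℂ v) (s : Finset ι) (x : H) :
    √(∑ i ∈ s, ‖⟪v i, x⟫_ℂ‖ ^ 2) ≤ ‖x‖ :=
  Real.sqrt_le_iff.2 ⟨norm_nonneg x, hv.sum_inner_products_le x⟩

lemma norm_traceOn_rankOne_le {v : ι → H} (hv : Orthonormal ℂ v) (s : Finset ι) (x y : H) :
    ‖traceOn v s (rankOne x y)‖ ≤ ‖x‖ * ‖y‖ :=
  calc ‖traceOn v s (rankOne x y)‖
      ≤ ∑ i ∈ s, ‖⟪v i, rankOne x y (v i)⟫_ℂ‖ := by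
        rw [traceOn_apply]
        exact norm_sum_le _ _
    _ = ∑ i ∈ s, ‖⟪v i, x⟫_ℂ‖ * ‖⟪v i, y⟫_ℂ‖ := by
        refine Finset.sum_congr rfl fun i _ ↦ ?_
        rw [rankOne, ContinuousLinearMap.smulRight_apply, innerSL_apply_apply, inner_smul_right,
          norm_mul, norm_inner_symm y, mul_comm]
    _ ≤ √(∑ i ∈ s, ‖⟪v i, x⟫_ℂ‖ ^ 2) * √(∑ i ∈ s, ‖⟪v i, y⟫_ℂ‖ ^ 2) :=
        Real.sum_mul_le_sqrt_mul_sqrt _ _ _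
    _ ≤ ‖x‖ * ‖y‖ := by
        gcongr <;> exact sqrt_sum_norm_inner_sq_le hv s _

lemma norm_traceOn_mul_le_of_hasSum_rankOne {v : ι → H} (hv : Orthonormal ℂ v) (s : Finset ι)
    {x y : κ → H} (hxy : Summable fun k ↦ ‖x k‖ * ‖y k‖) {T : H →L[ℂ] H}
    (hT : HasSum (fun k ↦ rankOne (x k) (y k)) T) (V : H →L[ℂ] H) :
    ‖traceOn v s (V * T)‖ ≤ ‖V‖ * ∑' k, ‖x k‖ * ‖y k‖ := by
  have hVT : HasSum (fun k ↦ traceOn v s (rankOne (V (x k)) (y k))) (traceOn v s (V * T)) := by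
    simpa only [mul_rankOne] using (hT.mul_left V).mapL (traceOn v s)
  rw [← hVT.tsum_eq]
  refine tsum_of_norm_bounded (hxy.hasSum.mul_left ‖V‖) fun k ↦ ?_
  calc ‖traceOn v s (rankOne (V (x k)) (y k))‖
      ≤ ‖V (x k)‖ * ‖y k‖ := norm_traceOn_rankOne_le hv s _ _
    _ ≤ ‖V‖ * ‖x k‖ * ‖y k‖ := by gcongr; exact V.le_opNorm _
    _ = ‖V‖ * (‖x k‖ * ‖y k‖) := mul_assoc _ _ _

lemma norm_traceOn_mul_le_of_hasSum_rankOne_lp {v : ι → H} (hv : Orthonormal ℂ v) (s : Finset ι)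
    {x y : lp (fun _ : κ ↦ H) 2} {T : H →L[ℂ] H}
    (hT : HasSum (fun k ↦ rankOne (x k) (y k)) T) {V : H →L[ℂ] H} (hV : ‖V‖ ≤ 1) :
    ‖traceOn v s (V * T)‖ ≤ ‖x‖ * ‖y‖ := by
  obtain ⟨h_summable, h_cauchySchwarz⟩ :=
    lp.tsum_mul_le_mul_norm (by simpa using Real.HolderConjugate.two_two) x y
  calc ‖traceOn v s (V * T)‖
      ≤ ‖V‖ * ∑' k, ‖x k‖ * ‖y k‖ := norm_traceOn_mul_le_of_hasSum_rankOne hv s h_summable hT V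
    _ ≤ 1 * (‖x‖ * ‖y‖) := by gcongr
    _ = ‖x‖ * ‖y‖ := one_mul _

variable [CompleteSpace H]

lemma summable_rankOne_lp (x y : lp (fun _ : κ ↦ H) 2) :
    Summable fun k ↦ rankOne (x k) (y k) := by
  refine .of_norm ?_
  simpa only [norm_rankOne] using
    lp.summable_mul (by simpa using Real.HolderConjugate.two_two) x y

lemma re_inner_opAbs_nonneg (T : H →L[ℂ] H) (x : H) : 0 ≤ (⟪x, opAbs T x⟫_ℂ).re :=
  have h_nonneg : 0 ≤ opAbs T := CFC.sqrt_nonneg _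
  ((ContinuousLinearMap.nonneg_iff_isPositive _).1 h_nonneg).re_inner_nonneg_right x

lemma tsum_re_inner_opAbs_le_of_norm_traceOn_mul_le {v : ι → H} {T : H →L[ℂ] H} {C : ℝ}
    (hC : ∀ (s : Finset ι) (V : H →L[ℂ] H), ‖V‖ ≤ 1 → ‖traceOn v s (V * T)‖ ≤ C) :
    ∑' i, ENNReal.ofReal (⟪v i, opAbs T (v i)⟫_ℂ).re ≤ ENNReal.ofReal C := by
  rw [ENNReal.tsum_eq_iSup_sum]
  refine iSup_le fun s ↦ ?_
  rw [← ENNReal.ofReal_sum_of_nonneg fun i _ ↦ re_inner_opAbs_nonneg T (v i)]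
  refine ENNReal.ofReal_le_ofReal ?_
  have h_closed : IsClosed {S | ‖traceOn v s S‖ ≤ C} :=
    isClosed_le (by fun_prop) continuous_const
  have h_opAbs : ‖traceOn v s (opAbs T)‖ ≤ C := by
    refine closure_minimal ?_ h_closed (abs_mem_closure_image_mul_right_closedBall T)
    rintro _ ⟨V, hV, rfl⟩
    exact hC s V (mem_closedBall_zero_iff.1 hV)
  calc ∑ i ∈ s, (⟪v i, opAbs T (v i)⟫_ℂ).re
      = (traceOn v s (opAbs T)).re := by rw [traceOn_apply, Complex.re_sum]
    _ ≤ ‖traceOn v s (opAbs T)‖ := Complex.re_le_norm _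
    _ ≤ C := h_opAbs

theorem traceNorm_density_diff_le_general {v : ι → H} (hv : Orthonormal ℂ v)
    {ε η : lp (fun _ : κ ↦ H) 2} {γε γη : H →L[ℂ] H}
    (hγε : HasSum (fun k ↦ rankOne (ε k) (ε k)) γε)
    (hγη : HasSum (fun k ↦ rankOne (η k) (η k)) γη) :
    ∑' i, ENNReal.ofReal (⟪v i, opAbs (γε - γη) (v i)⟫_ℂ).re ≤
      ENNReal.ofReal (‖ε - η‖ * (‖ε‖ + ‖η‖)) := by
  obtain ⟨A, hA⟩ := summable_rankOne_lp (ε - η) ε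
  obtain ⟨B, hB⟩ := summable_rankOne_lp η (ε - η)
  have h_diff : γε - γη = A + B := by
    refine (hγε.sub hγη).unique ?_
    simpa only [rankOne_self_sub_rankOne_self, lp.coeFn_sub, Pi.sub_apply] using hA.add hB
  refine tsum_re_inner_opAbs_le_of_norm_traceOn_mul_le fun s V hV ↦ ?_
  calc ‖traceOn v s (V * (γε - γη))‖
      = ‖traceOn v s (V * A) + traceOn v s (V * B)‖ := by rw [h_diff, mul_add, map_add]
    _ ≤ ‖traceOn v s (V * A)‖ + ‖traceOn v s (V * B)‖ := norm_add_le _ _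
    _ ≤ ‖ε - η‖ * ‖ε‖ + ‖η‖ * ‖ε - η‖ :=
        add_le_add (norm_traceOn_mul_le_of_hasSum_rankOne_lp hv s hA hV)
          (norm_traceOn_mul_le_of_hasSum_rankOne_lp hv s hB hV)
    _ = ‖ε - η‖ * (‖ε‖ + ‖η‖) := by ring

end HilbertSpace

/-- **Trace-norm estimate for differences of density operators.**
For `ε, η ∈ ℓ²(ℕ; 𝓗)` and the operators `γ_ε = ∑_k ε_k ⊗ ε̄_k`,
`γ_η = ∑_k η_k ⊗ η̄_k`, the trace norm satisfies
`tr |γ_ε − γ_η| ≤ ‖ε − η‖ (‖ε‖ + ‖η‖)`, where `|T| = (T*T)^{1/2}` and the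
trace of a positive operator is the `[0,∞]`-valued sum `∑ᵢ ⟪eᵢ, · eᵢ⟫` over a
Hilbert basis `e`. -/
theorem traceNorm_density_diff_le {H : Type*} [NormedAddCommGroup H]
    [InnerProductSpace ℂ H] [CompleteSpace H] {ι : Type*} (e : HilbertBasis ι ℂ H)
    (ε η : lp (fun _ : ℕ => H) 2) (γε γη : H →L[ℂ] H)
    (hγε : HasSum (fun k => rankOne (ε k) (ε k)) γε)
    (hγη : HasSum (fun k => rankOne (η k) (η k)) γη) :
    ∑' i, ENNReal.ofReal (⟪e i, opAbs (γε - γη) (e i)⟫_ℂ).re ≤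
      ENNReal.ofReal (‖ε - η‖ * (‖ε‖ + ‖η‖)) :=
  traceNorm_density_diff_le_general e.orthonormal hγε hγη
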